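/- (Monotonicity of unique information under additional side variables.) Let P be a joint distribution on 𝒳 × 𝒴 × 𝒵 × 𝒲, viewed as the joint law of (X, Y, Z, W). Then ŨI(X:Y∖(Z,W)), computed from P viewed as a joint distribution on 𝒳 × 𝒴 × (𝒵 × 𝒲), is less than or equal to ŨI(X:Y∖Z), computed from the (X,Y,Z)-marginal of P. In words: the unique information of Y about X with respect to the pair (Z,W) is at most the unique information of Y about X with respect to Z alone. -/

import Mathlib

/-!
Given `Q` in `Δ` of the `(X,Y,Z)`-marginal of `P`, glue `W` to it through the kernel `P(w | x,z)`:
`Q'(x,y,z,w) = Q(x,y,z) P(x,z,w) / P(x,z)` (`glue`). Then `Q' ∈ Δ_P` (`glue_mem`), and since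
`Y - (X,Z) - W` is a Markov chain under `Q'`,
`MI_Q(X:Y|Z) - MI_{Q'}(X:Y|Z,W) = ∑ Q' log (Q'(y|z,w) / Q(y|z)) ≥ 0` (`miXY_Z_glue_le`).
The last inequality is Gibbs' inequality, used in the form `sum_mul_log_le`. The same inequality
shows that conditional mutual information is nonnegative (`miXY_Z_nonneg`), so that the infimum
defining `UIY P` is taken over a set bounded below and is at most each of its elements.
-/

open scoped BigOperators
open Real

namespace PID

variable {𝒳 𝒴 𝒵 : Type*} [Fintype 𝒳] [Fintype 𝒴] [Fintype 𝒵]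

/-- A joint distribution on `𝒳 × 𝒴 × 𝒵`: nonnegative values summing to 1. -/
def IsDist (P : 𝒳 × 𝒴 × 𝒵 → ℝ) : Prop :=
  (∀ p, 0 ≤ P p) ∧ ∑ p, P p = 1

noncomputable def margX (P : 𝒳 × 𝒴 × 𝒵 → ℝ) (x : 𝒳) : ℝ := ∑ y, ∑ z, P (x, y, z)
noncomputable def margY (P : 𝒳 × 𝒴 × 𝒵 → ℝ) (y : 𝒴) : ℝ := ∑ x, ∑ z, P (x, y, z)
noncomputable def margZ (P : 𝒳 × 𝒴 × 𝒵 → ℝ) (z : 𝒵) : ℝ := ∑ x, ∑ y, P (x, y, z)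
noncomputable def margXY (P : 𝒳 × 𝒴 × 𝒵 → ℝ) (x : 𝒳) (y : 𝒴) : ℝ := ∑ z, P (x, y, z)
noncomputable def margXZ (P : 𝒳 × 𝒴 × 𝒵 → ℝ) (x : 𝒳) (z : 𝒵) : ℝ := ∑ y, P (x, y, z)
noncomputable def margYZ (P : 𝒳 × 𝒴 × 𝒵 → ℝ) (y : 𝒴) (z : 𝒵) : ℝ := ∑ x, P (x, y, z)

/-- Mutual information `MI(X:Y)`. -/
noncomputable def miXY (P : 𝒳 × 𝒴 × 𝒵 → ℝ) : ℝ :=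
  ∑ x, ∑ y, margXY P x y * Real.log (margXY P x y / (margX P x * margY P y))

/-- Mutual information `MI(X:Z)`. -/
noncomputable def miXZ (P : 𝒳 × 𝒴 × 𝒵 → ℝ) : ℝ :=
  ∑ x, ∑ z, margXZ P x z * Real.log (margXZ P x z / (margX P x * margZ P z))

/-- Mutual information `MI(Y:Z)`. -/
noncomputable def miYZ (P : 𝒳 × 𝒴 × 𝒵 → ℝ) : ℝ :=
  ∑ y, ∑ z, margYZ P y z * Real.log (margYZ P y z / (margY P y * margZ P z))

/-- Mutual information `MI(X:(Y,Z))`. -/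
noncomputable def miXYZ (P : 𝒳 × 𝒴 × 𝒵 → ℝ) : ℝ :=
  ∑ x, ∑ y, ∑ z, P (x, y, z) * Real.log (P (x, y, z) / (margX P x * margYZ P y z))

/-- Conditional mutual information `MI(X:Y|Z)`. -/
noncomputable def miXY_Z (P : 𝒳 × 𝒴 × 𝒵 → ℝ) : ℝ :=
  ∑ x, ∑ y, ∑ z, P (x, y, z) *
    Real.log (P (x, y, z) * margZ P z / (margXZ P x z * margYZ P y z))

/-- Conditional mutual information `MI(X:Z|Y)`. -/
noncomputable def miXZ_Y (P : 𝒳 × 𝒴 × 𝒵 → ℝ) : ℝ :=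
  ∑ x, ∑ y, ∑ z, P (x, y, z) *
    Real.log (P (x, y, z) * margY P y / (margXY P x y * margYZ P y z))

/-- Conditional mutual information `MI(Y:Z|X)`. -/
noncomputable def miYZ_X (P : 𝒳 × 𝒴 × 𝒵 → ℝ) : ℝ :=
  ∑ x, ∑ y, ∑ z, P (x, y, z) *
    Real.log (P (x, y, z) * margX P x / (margXY P x y * margXZ P x z))

/-- Conditional entropy `H(X|Y,Z)`. -/
noncomputable def hX_YZ (P : 𝒳 × 𝒴 × 𝒵 → ℝ) : ℝ :=
  -∑ x, ∑ y, ∑ z, P (x, y, z) * Real.log (P (x, y, z) / margYZ P y z)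

/-- Conditional entropy `H(X|Z)`. -/
noncomputable def hX_Z (P : 𝒳 × 𝒴 × 𝒵 → ℝ) : ℝ :=
  -∑ x, ∑ z, margXZ P x z * Real.log (margXZ P x z / margZ P z)

/-- Conditional entropy `H(Y|Z)`. -/
noncomputable def hY_Z (P : 𝒳 × 𝒴 × 𝒵 → ℝ) : ℝ :=
  -∑ y, ∑ z, margYZ P y z * Real.log (margYZ P y z / margZ P z)

/-- Conditional entropy `H(Z|Y)`. -/
noncomputable def hZ_Y (P : 𝒳 × 𝒴 × 𝒵 → ℝ) : ℝ :=
  -∑ y, ∑ z, margYZ P y z * Real.log (margYZ P y z / margY P y)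

/-- Co-information `CoI(X;Y;Z) = MI(X:Y) − MI(X:Y|Z)`. -/
noncomputable def coI (P : 𝒳 × 𝒴 × 𝒵 → ℝ) : ℝ := miXY P - miXY_Z P

/-- `Δ_P`: the joint distributions with the same pair marginals as `P` on `(X,Y)` and `(X,Z)`. -/
def ΔP (P : 𝒳 × 𝒴 × 𝒵 → ℝ) : Set (𝒳 × 𝒴 × 𝒵 → ℝ) :=
  {Q | IsDist Q ∧ (∀ x y, margXY Q x y = margXY P x y) ∧ ∀ x z, margXZ Q x z = margXZ P x z}

/-- `ŨI(X:Y∖Z) = min_{Q ∈ Δ_P} MI_Q(X:Y|Z)`. -/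
noncomputable def UIY (P : 𝒳 × 𝒴 × 𝒵 → ℝ) : ℝ := sInf (miXY_Z '' ΔP P)

/-- `ŨI(X:Z∖Y) = min_{Q ∈ Δ_P} MI_Q(X:Z|Y)`. -/
noncomputable def UIZ (P : 𝒳 × 𝒴 × 𝒵 → ℝ) : ℝ := sInf (miXZ_Y '' ΔP P)

/-- `S̃I(X:Y;Z) = max_{Q ∈ Δ_P} CoI_Q(X;Y;Z)`. -/
noncomputable def SI (P : 𝒳 × 𝒴 × 𝒵 → ℝ) : ℝ := sSup (coI '' ΔP P)

/-- `C̃I(X:Y;Z) = MI_P(X:(Y,Z)) − min_{Q ∈ Δ_P} MI_Q(X:(Y,Z))`. -/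
noncomputable def CI (P : 𝒳 × 𝒴 × 𝒵 → ℝ) : ℝ := miXYZ P - sInf (miXYZ '' ΔP P)

set_option linter.unusedSectionVars false

/-- Gibbs' inequality, in a form comparing two log-averages against the same weights `a`. It
follows from `log u ≤ u - 1` at `u = t i / s i`. -/
lemma sum_mul_log_le {ι : Type*} [Fintype ι] (a s t : ι → ℝ) (ha : ∀ i, 0 ≤ a i)
    (hs : ∀ i, 0 < a i → 0 < s i) (ht : ∀ i, 0 < a i → 0 < t i)
    (h : ∑ i, a i * (t i / s i) ≤ ∑ i, a i) :
    ∑ i, a i * Real.log (t i) ≤ ∑ i, a i * Real.log (s i) := by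
  have key : ∀ i, a i * Real.log (t i) ≤
      a i * Real.log (s i) + (a i * (t i / s i) - a i) := by
    intro i
    rcases (ha i).eq_or_lt with h0 | h0
    · simp [← h0]
    · have h1 := Real.log_le_sub_one_of_pos (div_pos (ht i h0) (hs i h0))
      rw [Real.log_div (ht i h0).ne' (hs i h0).ne'] at h1
      nlinarith
  have := Finset.sum_le_sum fun i (_ : i ∈ Finset.univ) => key i
  rw [Finset.sum_add_distrib, Finset.sum_sub_distrib] at this
  linarith

lemma le_margXZ {Q : 𝒳 × 𝒴 × 𝒵 → ℝ} (hQ : ∀ p, 0 ≤ Q p) (x : 𝒳) (y : 𝒴) (z : 𝒵) :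
    Q (x, y, z) ≤ margXZ Q x z :=
  Finset.single_le_sum (f := fun y => Q (x, y, z)) (fun _ _ => hQ _) (Finset.mem_univ y)

lemma le_margYZ {Q : 𝒳 × 𝒴 × 𝒵 → ℝ} (hQ : ∀ p, 0 ≤ Q p) (x : 𝒳) (y : 𝒴) (z : 𝒵) :
    Q (x, y, z) ≤ margYZ Q y z :=
  Finset.single_le_sum (f := fun x => Q (x, y, z)) (fun _ _ => hQ _) (Finset.mem_univ x)

lemma margXZ_nonneg {Q : 𝒳 × 𝒴 × 𝒵 → ℝ} (hQ : ∀ p, 0 ≤ Q p) (x : 𝒳) (z : 𝒵) :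
    0 ≤ margXZ Q x z := Finset.sum_nonneg fun _ _ => hQ _

lemma margYZ_nonneg {Q : 𝒳 × 𝒴 × 𝒵 → ℝ} (hQ : ∀ p, 0 ≤ Q p) (y : 𝒴) (z : 𝒵) :
    0 ≤ margYZ Q y z := Finset.sum_nonneg fun _ _ => hQ _

lemma margZ_nonneg {Q : 𝒳 × 𝒴 × 𝒵 → ℝ} (hQ : ∀ p, 0 ≤ Q p) (z : 𝒵) :
    0 ≤ margZ Q z := Finset.sum_nonneg fun _ _ => margXZ_nonneg hQ _ _

lemma le_margZ {Q : 𝒳 × 𝒴 × 𝒵 → ℝ} (hQ : ∀ p, 0 ≤ Q p) (x : 𝒳) (y : 𝒴) (z : 𝒵) :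
    Q (x, y, z) ≤ margZ Q z :=
  (le_margXZ hQ x y z).trans <|
    Finset.single_le_sum (f := fun x => margXZ Q x z) (fun _ _ => margXZ_nonneg hQ _ _)
      (Finset.mem_univ x)

lemma sum_margXZ (Q : 𝒳 × 𝒴 × 𝒵 → ℝ) (z : 𝒵) : ∑ x, margXZ Q x z = margZ Q z := rfl

lemma sum_margYZ (Q : 𝒳 × 𝒴 × 𝒵 → ℝ) (z : 𝒵) : ∑ y, margYZ Q y z = margZ Q z :=
  Finset.sum_comm

lemma sum_margZ (Q : 𝒳 × 𝒴 × 𝒵 → ℝ) : ∑ z, margZ Q z = ∑ p, Q p := by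
  simp only [margZ, Fintype.sum_prod_type]
  rw [Finset.sum_comm]
  exact Finset.sum_congr rfl fun x _ => Finset.sum_comm

lemma miXY_Z_nonneg {Q : 𝒳 × 𝒴 × 𝒵 → ℝ} (hQ : ∀ p, 0 ≤ Q p) : 0 ≤ miXY_Z Q := by
  have h := sum_mul_log_le Q
    (fun p => Q p * margZ Q p.2.2 / (margXZ Q p.1 p.2.2 * margYZ Q p.2.1 p.2.2))
    (fun _ => 1) hQ ?_ (fun _ _ => one_pos) ?_
  · simpa [miXY_Z, Fintype.sum_prod_type] using h
  · rintro ⟨x, y, z⟩ h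
    have h1 := h.trans_le (le_margXZ hQ x y z)
    have h2 := h.trans_le (le_margYZ hQ x y z)
    have h3 := h.trans_le (le_margZ hQ x y z)
    positivity
  · calc _ ≤ ∑ p : 𝒳 × 𝒴 × 𝒵,
          margXZ Q p.1 p.2.2 * margYZ Q p.2.1 p.2.2 / margZ Q p.2.2 := by
          refine Finset.sum_le_sum ?_
          rintro ⟨x, y, z⟩ -
          have h1 := margXZ_nonneg hQ x z
          have h2 := margYZ_nonneg hQ y z
          have h3 := margZ_nonneg hQ z
          rcases (hQ (x, y, z)).eq_or_lt with h | h
          · rw [← h, zero_mul]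
            positivity
          · have h4 := h.trans_le (le_margZ hQ x y z)
            refine le_of_eq ?_
            dsimp only
            field_simp
      _ = ∑ z, margZ Q z * margZ Q z / margZ Q z := by
          simp only [Fintype.sum_prod_type]
          rw [Finset.sum_congr rfl fun x _ => Finset.sum_comm, Finset.sum_comm]
          refine Finset.sum_congr rfl fun z _ => ?_
          simp only [← Finset.sum_div, ← Finset.mul_sum, ← Finset.sum_mul, sum_margYZ, sum_margXZ]
      _ = ∑ p, Q p := by simp only [mul_self_div_self, sum_margZ]

section Gluing

variable {𝒲 : Type*} [Fintype 𝒲]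

/-- The `(X,Y,Z)`-marginal of a joint distribution on `𝒳 × 𝒴 × (𝒵 × 𝒲)`. -/
noncomputable abbrev dropW (P : 𝒳 × 𝒴 × 𝒵 × 𝒲 → ℝ) : 𝒳 × 𝒴 × 𝒵 → ℝ :=
  fun p => ∑ w, P (p.1, p.2.1, p.2.2, w)

/-- The extension of `Q` to `𝒳 × 𝒴 × (𝒵 × 𝒲)` by the conditional law of `W` given `(X,Z)` under
`P`. Where `P(x,z) = 0` the value is `0` (division by zero), which is right because `Q(x,y,z)`
vanishes there for `Q ∈ Δ` of the marginal of `P`. -/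
noncomputable def glue (P : 𝒳 × 𝒴 × 𝒵 × 𝒲 → ℝ) (Q : 𝒳 × 𝒴 × 𝒵 → ℝ) : 𝒳 × 𝒴 × 𝒵 × 𝒲 → ℝ :=
  fun p => Q (p.1, p.2.1, p.2.2.1) * (margXZ P p.1 p.2.2 / margXZ (dropW P) p.1 p.2.2.1)

lemma sum_margXZ_eq (P : 𝒳 × 𝒴 × 𝒵 × 𝒲 → ℝ) (x : 𝒳) (z : 𝒵) :
    ∑ w, margXZ P x (z, w) = margXZ (dropW P) x z := Finset.sum_comm

lemma dropW_isDist {P : 𝒳 × 𝒴 × 𝒵 × 𝒲 → ℝ} (hP : IsDist P) : IsDist (dropW P) := by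
  refine ⟨fun p => Finset.sum_nonneg fun _ _ => hP.1 _, ?_⟩
  rw [← hP.2]
  simp only [Fintype.sum_prod_type]

lemma glue_nonneg {P : 𝒳 × 𝒴 × 𝒵 × 𝒲 → ℝ} (hP : IsDist P) {Q : 𝒳 × 𝒴 × 𝒵 → ℝ}
    (hQ : Q ∈ ΔP (dropW P)) (p) : 0 ≤ glue P Q p :=
  mul_nonneg (hQ.1.1 _) (div_nonneg (margXZ_nonneg hP.1 _ _)
    (margXZ_nonneg (dropW_isDist hP).1 _ _))

/-- The `(X,Y,Z)`-marginal of the glued distribution is `Q`. -/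
lemma sum_glue {P : 𝒳 × 𝒴 × 𝒵 × 𝒲 → ℝ} {Q : 𝒳 × 𝒴 × 𝒵 → ℝ}
    (hQ : Q ∈ ΔP (dropW P)) (x : 𝒳) (y : 𝒴) (z : 𝒵) :
    ∑ w, glue P Q (x, y, z, w) = Q (x, y, z) := by
  simp only [glue, ← Finset.mul_sum, ← Finset.sum_div, sum_margXZ_eq]
  by_cases h : margXZ (dropW P) x z = 0
  · have h1 := le_margXZ hQ.1.1 x y z
    rw [hQ.2.2, h] at h1
    rw [le_antisymm h1 (hQ.1.1 _), zero_mul]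
  · rw [div_self h, mul_one]

lemma margXZ_glue {P : 𝒳 × 𝒴 × 𝒵 × 𝒲 → ℝ} (hP : IsDist P) {Q : 𝒳 × 𝒴 × 𝒵 → ℝ}
    (hQ : Q ∈ ΔP (dropW P)) (x : 𝒳) (zw : 𝒵 × 𝒲) :
    margXZ (glue P Q) x zw = margXZ P x zw := by
  have h0 : margXZ (glue P Q) x zw =
      margXZ Q x zw.1 * (margXZ P x zw / margXZ (dropW P) x zw.1) := by
    simp only [margXZ, glue, ← Finset.sum_mul]
  rw [h0, hQ.2.2]
  by_cases h : margXZ (dropW P) x zw.1 = 0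
  · have h1 := Finset.single_le_sum (f := fun w => margXZ P x (zw.1, w))
      (fun _ _ => margXZ_nonneg hP.1 _ _) (Finset.mem_univ zw.2)
    rw [sum_margXZ_eq, h] at h1
    rw [h, zero_mul]
    exact le_antisymm (margXZ_nonneg hP.1 _ _) h1
  · rw [mul_div_cancel₀ _ h]

lemma glue_mem {P : 𝒳 × 𝒴 × 𝒵 × 𝒲 → ℝ} (hP : IsDist P) {Q : 𝒳 × 𝒴 × 𝒵 → ℝ}
    (hQ : Q ∈ ΔP (dropW P)) : glue P Q ∈ ΔP P := by
  refine ⟨⟨glue_nonneg hP hQ, ?_⟩, fun x y => ?_, margXZ_glue hP hQ⟩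
  · rw [← hQ.1.2]
    simp only [Fintype.sum_prod_type, sum_glue hQ]
  · have h := hQ.2.1 x y
    simp only [margXY, Fintype.sum_prod_type, sum_glue hQ] at h ⊢
    exact h

lemma miXY_Z_glue_le {P : 𝒳 × 𝒴 × 𝒵 × 𝒲 → ℝ} (hP : IsDist P) {Q : 𝒳 × 𝒴 × 𝒵 → ℝ}
    (hQ : Q ∈ ΔP (dropW P)) : miXY_Z (glue P Q) ≤ miXY_Z Q := by
  set G := glue P Q with hG
  have hG0 : ∀ p, 0 ≤ G p := glue_nonneg hP hQ
  have hGQ : ∀ x y z w, 0 < G (x, y, z, w) → 0 < Q (x, y, z) := by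
    intro x y z w h
    refine (hQ.1.1 _).lt_of_ne fun h0 => h.ne' ?_
    simp [hG, glue, ← h0]
  have h := sum_mul_log_le G
    (fun p => Q (p.1, p.2.1, p.2.2.1) * margZ Q p.2.2.1 /
      (margXZ Q p.1 p.2.2.1 * margYZ Q p.2.1 p.2.2.1))
    (fun p => G p * margZ G p.2.2 / (margXZ G p.1 p.2.2 * margYZ G p.2.1 p.2.2)) hG0 ?_ ?_ ?_
  · simpa only [miXY_Z, Fintype.sum_prod_type, ← Finset.sum_mul, hG, sum_glue hQ] using h
  · rintro ⟨x, y, z, w⟩ h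
    have h0 := hGQ x y z w h
    have h1 := h0.trans_le (le_margXZ hQ.1.1 x y z)
    have h2 := h0.trans_le (le_margYZ hQ.1.1 x y z)
    have h3 := h0.trans_le (le_margZ hQ.1.1 x y z)
    positivity
  · rintro ⟨x, y, z, w⟩ h
    have h1 := h.trans_le (le_margXZ hG0 x y (z, w))
    have h2 := h.trans_le (le_margYZ hG0 x y (z, w))
    have h3 := h.trans_le (le_margZ hG0 x y (z, w))
    positivity
  · -- By the Markov property the ratio of the two densities is `Q(y|z) / Q'(y|z,w)`.
    calc _ = ∑ p : 𝒳 × 𝒴 × 𝒵 × 𝒲, G p * (margZ G p.2.2 * margYZ Q p.2.1 p.2.2.1 /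
            (margYZ G p.2.1 p.2.2 * margZ Q p.2.2.1)) := by
          refine Finset.sum_congr rfl ?_
          rintro ⟨x, y, z, w⟩ -
          rcases (hG0 (x, y, z, w)).eq_or_lt with h | h
          · rw [← h, zero_mul, zero_mul]
          · have h0 := hGQ x y z w h
            have h1 := h0.trans_le (le_margXZ hQ.1.1 x y z)
            have h2 := h0.trans_le (le_margYZ hQ.1.1 x y z)
            have h3 := h0.trans_le (le_margZ hQ.1.1 x y z)
            have h4 := h.trans_le (le_margXZ hG0 x y (z, w))
            have h5 := h.trans_le (le_margYZ hG0 x y (z, w))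
            have h6 : G (x, y, z, w) * margXZ Q x z = Q (x, y, z) * margXZ G x (z, w) := by
              rw [margXZ_glue hP hQ, hQ.2.2, hG, glue]
              rw [hQ.2.2] at h1
              dsimp only
              field_simp
            congr 1
            dsimp only
            rw [div_div_div_eq, div_eq_div_iff (by positivity) (by positivity)]
            linear_combination (margZ G (z, w) * margYZ Q y z * margYZ G y (z, w) *
              margZ Q z) * h6
      _ = ∑ zw : 𝒵 × 𝒲, ∑ y, margYZ G y zw * (margZ G zw * margYZ Q y zw.1 /
            (margYZ G y zw * margZ Q zw.1)) := by
          rw [Fintype.sum_prod_type, Finset.sum_comm, Fintype.sum_prod_type, Finset.sum_comm]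
          simp only [← Finset.sum_mul]
          rfl
      _ ≤ ∑ zw : 𝒵 × 𝒲, ∑ y, margZ G zw * margYZ Q y zw.1 / margZ Q zw.1 := by
          refine Finset.sum_le_sum fun zw _ => Finset.sum_le_sum fun y _ => ?_
          have h1 := margYZ_nonneg hQ.1.1 y zw.1
          have h2 := margZ_nonneg hQ.1.1 zw.1
          have h3 := margZ_nonneg hG0 zw
          rcases (margYZ_nonneg hG0 y zw).eq_or_lt with h | h
          · rw [← h, zero_mul]
            positivity
          · refine le_of_eq ?_
            rw [← mul_div_assoc, mul_div_mul_left _ _ h.ne']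
      _ ≤ ∑ zw, margZ G zw := by
          refine Finset.sum_le_sum fun zw _ => ?_
          rw [← Finset.sum_div, ← Finset.mul_sum, sum_margYZ, mul_div_assoc]
          exact mul_le_of_le_one_right (margZ_nonneg hG0 zw) (div_self_le_one _)
      _ = ∑ p, G p := sum_margZ G

end Gluing

/-- unique information cannot grow when additional side variables are taken
into account: `ŨI(X:Y∖(Z,W)) ≤ ŨI(X:Y∖Z)`, the latter computed from the `(X,Y,Z)`-marginal. -/
theorem stmt16 {𝒲 : Type*} [Fintype 𝒲]
    [Nonempty 𝒳] [Nonempty 𝒴] [Nonempty 𝒵] [Nonempty 𝒲]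
    (P : 𝒳 × 𝒴 × 𝒵 × 𝒲 → ℝ) (hP : IsDist P) :
    UIY P ≤ UIY (fun p : 𝒳 × 𝒴 × 𝒵 => ∑ w, P (p.1, p.2.1, p.2.2, w)) := by
  -- The marginal lies in its own `Δ`, so the right-hand infimum is over a nonempty set.
  have hmem : dropW P ∈ ΔP (dropW P) := ⟨dropW_isDist hP, fun _ _ => rfl, fun _ _ => rfl⟩
  refine le_csInf ⟨_, Set.mem_image_of_mem _ hmem⟩ ?_
  rintro _ ⟨Q, hQ, rfl⟩
  refine (csInf_le ⟨0, ?_⟩ (Set.mem_image_of_mem _ (glue_mem hP hQ))).trans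
    (miXY_Z_glue_le hP hQ)
  rintro _ ⟨R, hR, rfl⟩
  exact miXY_Z_nonneg hR.1.1

end PID
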